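/- arXiv:2302.13420 — 3 statements merged into one kernel-verified Lean document; each statement's English description precedes it below -/
import Mathlib

section
/- Let K be a field with algebraic closure K̄, and let F ∈ K[x,y,z] be homogeneous of degree d ≥ 3 defining a plane curve D whose unique singular point over K̄ is P₀ = [0:0:1]. Let f(x,y) = F(x,y,1), so that f has no constant or linear terms, and let A₂(x,y) be the homogeneous degree-2 component of f. If A₂ cannot be written as L(x,y)² for a linear form L over K̄ (equivalently, A₂ = 0 has exactly two solutions in ℙ¹(K̄)), then F is irreducible over K̄. -/
open MvPolynomial

lemma res_scale {k : Type*} [Field k] (t : k) (m n p q : ℕ)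
    (f f' g g' : Polynomial k)
    (hf : ∀ i ≤ p, t ^ i * f'.coeff i = t ^ m * f.coeff i)
    (hg : ∀ i ≤ q, t ^ i * g'.coeff i = t ^ n * g.coeff i) :
    t ^ (∑ i : Fin (p + q), (i : ℕ)) * Polynomial.resultant f' g' p q =
      t ^ ((∑ j : Fin p, (n + (j : ℕ))) + ∑ j : Fin q, (m + (j : ℕ))) *
        Polynomial.resultant f g p q := by
  have h1 := Matrix.det_mul_column (fun i : Fin (p + q) => t ^ (i : ℕ))
    (Polynomial.sylvester f' g' p q)
  have h2 := Matrix.det_mul_row (fun j : Fin (p + q) => (j.addCases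
    (fun j₁ : Fin p => t ^ (n + (j₁ : ℕ))) (fun j₁ : Fin q => t ^ (m + (j₁ : ℕ))) : k))
    (Polynomial.sylvester f g p q)
  rw [Fin.prod_univ_add] at h2
  simp only [Fin.addCases_left, Fin.addCases_right] at h2
  rw [Finset.prod_pow_eq_pow_sum, Finset.prod_pow_eq_pow_sum, ← pow_add] at h2
  rw [Finset.prod_pow_eq_pow_sum] at h1
  unfold Polynomial.resultant
  rw [← h1, ← h2]
  congr 1
  ext i j
  simp only [Matrix.of_apply, Polynomial.sylvester]
  induction j using Fin.addCases with
  | left j =>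
    simp only [Fin.addCases_left, Set.mem_Icc]
    split_ifs with h
    · have := hg (i - j) (by omega)
      have e : t ^ (i : ℕ) = t ^ (j : ℕ) * t ^ ((i : ℕ) - j) := by
        rw [← pow_add]; congr 1; omega
      rw [e, mul_assoc, this]; ring
    · simp
  | right j =>
    simp only [Fin.addCases_right, Set.mem_Icc]
    split_ifs with h
    · have := hf (i - j) (by omega)
      have e : t ^ (i : ℕ) = t ^ (j : ℕ) * t ^ ((i : ℕ) - j) := by
        rw [← pow_add]; congr 1; omega
      rw [e, mul_assoc, this]; ring
    · simp

lemma hom_root {k : Type*} [Field k] [IsAlgClosed k] (R : MvPolynomial (Fin 2) k) (D : ℕ)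
    (hD : 1 ≤ D) (h : ∀ t a b : k, t ≠ 0 → eval ![t * a, t * b] R = t ^ D * eval ![a, b] R) :
    ∃ a b : k, ¬ (a = 0 ∧ b = 0) ∧ eval ![a, b] R = 0 := by
  let r1 : Polynomial k := aeval ![1, Polynomial.X] R
  let r2 : Polynomial k := aeval ![Polynomial.X, 1] R
  have e1 : ∀ s, r1.eval s = eval ![1, s] R := by
    intro s
    have : (Polynomial.aeval s).comp (aeval ![(1 : Polynomial k), Polynomial.X]) =
        (aeval ![1, s] : MvPolynomial (Fin 2) k →ₐ[k] k) := by
      ext i; fin_cases i <;> simp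
    have := congrArg (fun φ => φ R) this
    simpa [r1, Polynomial.aeval_def, aeval_eq_eval] using this
  have e2 : ∀ s, r2.eval s = eval ![s, 1] R := by
    intro s
    have : (Polynomial.aeval s).comp (aeval ![Polynomial.X, (1 : Polynomial k)]) =
        (aeval ![s, 1] : MvPolynomial (Fin 2) k →ₐ[k] k) := by
      ext i; fin_cases i <;> simp
    have := congrArg (fun φ => φ R) this
    simpa [r2, Polynomial.aeval_def, aeval_eq_eval] using this
  by_contra hcon
  push Not at hcon
  have hdeg : r1.degree = 0 := by
    by_contra hne
    obtain ⟨s, hs⟩ := IsAlgClosed.exists_root r1 hne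
    exact hcon 1 s (by simp) (by rw [← e1]; exact hs)
  obtain ⟨c, hc⟩ : ∃ c, r1 = Polynomial.C c := ⟨_, Polynomial.eq_C_of_degree_eq_zero hdeg⟩
  have h0 : r2 = Polynomial.C c * Polynomial.X ^ D := by
    apply Polynomial.eq_of_infinite_eval_eq
    refine Set.Infinite.mono (s := {0}ᶜ) ?_ (Set.Finite.infinite_compl (Set.finite_singleton 0))
    intro s hs
    have hs : s ≠ 0 := hs
    have := h s 1 s⁻¹ hs
    rw [← e1, hc] at this
    simp only [mul_one, mul_inv_cancel₀ hs, Polynomial.eval_C] at this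
    show r2.eval s = _
    rw [e2, this]
    simp only [Polynomial.eval_mul, Polynomial.eval_C, Polynomial.eval_pow, Polynomial.eval_X]
    ring
  refine hcon 0 1 (by simp) ?_
  rw [← e2, h0]
  simp; right; omega

lemma common_root {k : Type*} [Field k] [IsAlgClosed k] (f g : Polynomial k) (p q : ℕ)
    (hf : f.natDegree ≤ p) (hg : g.natDegree ≤ q) (h : f.coeff p ≠ 0 ∨ g.coeff q ≠ 0)
    (hr : Polynomial.resultant f g p q = 0) : ∃ z, f.eval z = 0 ∧ g.eval z = 0 := by
  wlog hw : f.coeff p ≠ 0 generalizing f g p q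
  · obtain ⟨z, h1, h2⟩ := this g f q p hg hf h.symm
      (by rw [Polynomial.resultant_comm, hr, mul_zero]) (by tauto)
    exact ⟨z, h2, h1⟩
  have hp : f.natDegree = p := le_antisymm hf (Polynomial.le_natDegree_of_ne_zero hw)
  obtain ⟨j, rfl⟩ := Nat.exists_eq_add_of_le hg
  subst hp
  rw [Polynomial.resultant_add_right_deg _ _ _ _ _ le_rfl] at hr
  have hr' := (mul_eq_zero.mp hr).resolve_left (pow_ne_zero _ hw)
  have hc := (Polynomial.resultant_eq_zero_iff.mp hr').2
  rw [Polynomial.isCoprime_iff_aeval_ne_zero_of_isAlgClosed k k] at hc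
  push Not at hc
  simpa [Polynomial.aeval_def] using hc

noncomputable def gradeHom (σ k : Type*) [Field k] :
    MvPolynomial σ k →ₐ[k] Polynomial (MvPolynomial σ k) :=
  aeval (fun i => Polynomial.C (X i) * Polynomial.X)

lemma gradeHom_coeff {σ k : Type*} [Field k] (p : MvPolynomial σ k) (i : ℕ) :
    (gradeHom σ k p).coeff i = homogeneousComponent i p := by
  induction p using MvPolynomial.induction_on' with
  | monomial s c =>
    have : gradeHom σ k (monomial s c) = Polynomial.monomial s.degree (monomial s c) := by
      rw [gradeHom, aeval_monomial]
      have e1 : (s.prod fun i e => (Polynomial.C (X i : MvPolynomial σ k) * Polynomial.X) ^ e) =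
          Polynomial.C (s.prod fun i e => X i ^ e) * Polynomial.X ^ s.degree := by
        simp only [Finsupp.prod, mul_pow, Finset.prod_mul_distrib, map_prod,
          Finset.prod_pow_eq_pow_sum, Finsupp.degree_apply, Polynomial.C_pow]
      have e2 : algebraMap k (Polynomial (MvPolynomial σ k)) c = Polynomial.C (C c) := rfl
      rw [e1, e2, ← mul_assoc, ← Polynomial.C_mul, ← monomial_eq,
        Polynomial.C_mul_X_pow_eq_monomial]
    rw [this, Polynomial.coeff_monomial]
    split_ifs with h
    · exact (homogeneousComponent_eq_self (isHomogeneous_monomial c h)).symm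
    · rw [homogeneousComponent_of_mem (isHomogeneous_monomial c rfl), if_neg (Ne.symm h)]
  | add p q hp hq => simp [hp, hq]

lemma gradeHom_of_hom {σ k : Type*} [Field k] (p : MvPolynomial σ k) (d : ℕ)
    (hp : p.IsHomogeneous d) : gradeHom σ k p = Polynomial.monomial d p := by
  ext1 i
  rw [gradeHom_coeff, Polynomial.coeff_monomial, homogeneousComponent_of_mem hp]
  simp [eq_comm]

lemma gradeHom_ne {σ k : Type*} [Field k] (p : MvPolynomial σ k) (hp : p ≠ 0) :
    gradeHom σ k p ≠ 0 := by
  intro h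
  apply hp
  rw [← sum_homogeneousComponent p]
  apply Finset.sum_eq_zero
  intro i _
  rw [← gradeHom_coeff, h, Polynomial.coeff_zero]

lemma hom_factors {σ k : Type*} [Field k] (G H : MvPolynomial σ k) (d : ℕ)
    (h : (G * H).IsHomogeneous d) (h0 : G * H ≠ 0) :
    ∃ m n, m + n = d ∧ G.IsHomogeneous m ∧ H.IsHomogeneous n := by
  have hG := gradeHom_ne G (left_ne_zero_of_mul h0)
  have hH := gradeHom_ne H (right_ne_zero_of_mul h0)
  have e := gradeHom_of_hom _ d h
  rw [map_mul] at e
  have e1 := congrArg Polynomial.natDegree e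
  have e2 := congrArg Polynomial.natTrailingDegree e
  rw [Polynomial.natDegree_mul hG hH, Polynomial.natDegree_monomial_eq _ h0] at e1
  rw [Polynomial.natTrailingDegree_mul hG hH, Polynomial.natTrailingDegree_monomial h0] at e2
  have l1 := Polynomial.natTrailingDegree_le_natDegree (gradeHom σ k G)
  have l2 := Polynomial.natTrailingDegree_le_natDegree (gradeHom σ k H)
  have key : ∀ P : MvPolynomial σ k, (gradeHom σ k P).natTrailingDegree =
      (gradeHom σ k P).natDegree → P.IsHomogeneous (gradeHom σ k P).natDegree := by
    intro P hP
    have : P = homogeneousComponent (gradeHom σ k P).natDegree P := by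
      conv_lhs => rw [← sum_homogeneousComponent P]
      by_cases hz : P = 0
      · subst hz; simp
      have hz' : ∀ i, i ≠ (gradeHom σ k P).natDegree → homogeneousComponent i P = 0 := by
        intro i hi
        rw [← gradeHom_coeff]
        rcases lt_or_gt_of_ne hi with h | h
        · exact Polynomial.coeff_eq_zero_of_lt_natTrailingDegree (by omega)
        · exact Polynomial.coeff_eq_zero_of_natDegree_lt h
      apply Finset.sum_eq_single
      · intro b _ hb; exact hz' b hb
      · intro hb
        exact homogeneousComponent_eq_zero _ _ (by simpa using hb)
    rw [this]
    convert homogeneousComponent_isHomogeneous _ _ using 1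
    rw [← this]
  exact ⟨_, _, e1, key G (by omega), key H (by omega)⟩

/-- `F(x,y,z)` seen as a polynomial in `z`. -/
noncomputable def zpoly {k : Type*} [Field k] :
    MvPolynomial (Fin 3) k →ₐ[k] Polynomial (MvPolynomial (Fin 2) k) :=
  aeval ![Polynomial.C (X 0), Polynomial.C (X 1), Polynomial.X]

lemma zpoly_coeff {k : Type*} [Field k] (G : MvPolynomial (Fin 3) k) (m : ℕ)
    (hG : G.IsHomogeneous m) (i : ℕ) :
    (i ≤ m → ((zpoly G).coeff i).IsHomogeneous (m - i)) ∧ (m < i → (zpoly G).coeff i = 0) := by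
  have key : ∀ s ∈ G.support, (i ≤ m → ((zpoly (monomial s (coeff s G))).coeff i).IsHomogeneous
      (m - i)) ∧ (m < i → (zpoly (monomial s (coeff s G))).coeff i = 0) := by
    intro s hs
    have hs' := hG.degree_eq_sum_deg_support hs
    have hd : m = s 0 + s 1 + s 2 := by
      rw [hs', ← Finsupp.degree_apply, Finsupp.degree_eq_sum, Fin.sum_univ_three]
    have : zpoly (monomial s (coeff s G)) =
        Polynomial.monomial (s 2) (C (coeff s G) * (X 0 ^ s 0 * X 1 ^ s 1)) := by
      rw [zpoly, aeval_monomial, Finsupp.prod_fintype _ _ (by simp), Fin.prod_univ_three]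
      rw [← Polynomial.C_mul_X_pow_eq_monomial]
      simp [mul_assoc]
    rw [this, Polynomial.coeff_monomial]
    constructor
    · intro hi
      split_ifs with h
      · have := ((isHomogeneous_X_pow (R := k) (0 : Fin 2) (s 0)).mul
          (isHomogeneous_X_pow (R := k) (1 : Fin 2) (s 1))).C_mul (coeff s G)
        convert this using 1
        omega
      · exact isHomogeneous_zero _ _ _
    · intro hi
      rw [if_neg]; omega
  have e : (zpoly G).coeff i = ∑ s ∈ G.support, (zpoly (monomial s (coeff s G))).coeff i := by
    conv_lhs => rw [G.as_sum]
    rw [map_sum, Polynomial.finsetSum_coeff]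
  rw [e]
  exact ⟨fun hi => IsHomogeneous.sum _ _ _ fun s hs => (key s hs).1 hi,
    fun hi => Finset.sum_eq_zero fun s hs => (key s hs).2 hi⟩

lemma zpoly_eval {k : Type*} [Field k] (G : MvPolynomial (Fin 3) k) (a b z : k) :
    ((zpoly G).map (eval ![a, b])).eval z = eval ![a, b, z] G := by
  have : ((Polynomial.evalRingHom z).comp (Polynomial.mapRingHom (eval ![a, b]))).comp
      (zpoly (k := k)).toRingHom = eval ![a, b, z] := by
    apply MvPolynomial.ringHom_ext
    · intro r
      simp [zpoly]
    · intro i; fin_cases i <;> simp [zpoly]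
  exact congrArg (fun φ => φ G) this

lemma zpoly_eval_one {k : Type*} [Field k] (G : MvPolynomial (Fin 3) k) :
    aeval (![X 0, X 1, 1] : Fin 3 → MvPolynomial (Fin 2) k) G = (zpoly G).eval 1 := by
  have : (Polynomial.evalRingHom 1).comp (zpoly (k := k)).toRingHom =
      (aeval (![X 0, X 1, 1] : Fin 3 → MvPolynomial (Fin 2) k)).toRingHom := by
    apply MvPolynomial.ringHom_ext
    · intro r
      simp [zpoly]
    · intro i; fin_cases i <;> simp [zpoly]
  exact (congrArg (fun φ => φ G) this).symm

lemma hom_eval_scale {k : Type*} [Field k] (L : MvPolynomial (Fin 2) k) (e : ℕ)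
    (hL : L.IsHomogeneous e) (t a b : k) : eval ![t * a, t * b] L = t ^ e * eval ![a, b] L := by
  rw [eval_eq', eval_eq', Finset.mul_sum]
  apply Finset.sum_congr rfl
  intro s hs
  have hs' := hL.degree_eq_sum_deg_support hs
  rw [← Finsupp.degree_apply, Finsupp.degree_eq_sum, Fin.sum_univ_two] at hs'
  simp [Fin.prod_univ_two, hs', mul_pow, pow_add]
  ring

lemma bez {k : Type*} [Field k] [IsAlgClosed k] (G H : MvPolynomial (Fin 3) k) (m n p q : ℕ)
    (hG : G.IsHomogeneous m) (hH : H.IsHomogeneous n) (hp : p ≤ m) (hq : q ≤ n)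
    (hGp : (zpoly G).natDegree ≤ p) (hHq : (zpoly H).natDegree ≤ q)
    (hD : p * q < n * p + m * q)
    (hlead : ∀ a b : k, ¬ (a = 0 ∧ b = 0) →
      eval ![a, b] ((zpoly G).coeff p) ≠ 0 ∨ eval ![a, b] ((zpoly H).coeff q) ≠ 0) :
    ∃ a b z : k, ¬ (a = 0 ∧ b = 0) ∧ eval ![a, b, z] G = 0 ∧ eval ![a, b, z] H = 0 := by
  obtain ⟨a, b, hab, hR⟩ := hom_root (Polynomial.resultant (zpoly G) (zpoly H) p q)
    (n * p + m * q - p * q) (by omega) (by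
      intro t a b ht
      rw [← Polynomial.resultant_map_map, ← Polynomial.resultant_map_map]
      have key : ∀ (P : MvPolynomial (Fin 3) k) (e : ℕ), P.IsHomogeneous e → ∀ i ≤ e,
          t ^ i * ((zpoly P).map (eval ![t * a, t * b])).coeff i =
          t ^ e * ((zpoly P).map (eval ![a, b])).coeff i := by
        intro P e hP i hi
        rw [Polynomial.coeff_map, Polynomial.coeff_map,
          hom_eval_scale _ _ ((zpoly_coeff P e hP i).1 hi), ← mul_assoc, ← pow_add]
        congr 2; omega
      have := res_scale t m n p q _ _ _ _ (fun i hi => key G m hG i (hi.trans hp))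
        (fun i hi => key H n hH i (hi.trans hq))
      have hexp : (∑ j : Fin p, (n + (j : ℕ))) + ∑ j : Fin q, (m + (j : ℕ)) =
          (∑ i : Fin (p + q), (i : ℕ)) + (n * p + m * q - p * q) := by
        rw [Fin.sum_univ_add]
        simp only [Fin.val_castAdd, Fin.val_natAdd, Finset.sum_add_distrib, Finset.sum_const,
          Finset.card_univ, Fintype.card_fin, smul_eq_mul]
        have e1 := mul_comm n p
        have e2 := mul_comm m q
        have e3 := mul_comm p q
        omega
      rw [hexp, pow_add, mul_assoc] at this
      exact mul_left_cancel₀ (pow_ne_zero _ ht) this)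
  rw [← Polynomial.resultant_map_map] at hR
  obtain ⟨z, h1, h2⟩ := common_root _ _ p q (Polynomial.natDegree_map_le.trans hGp)
    (Polynomial.natDegree_map_le.trans hHq)
    (by simpa only [Polynomial.coeff_map] using hlead a b hab) hR
  exact ⟨a, b, z, hab, by rwa [zpoly_eval] at h1, by rwa [zpoly_eval] at h2⟩

lemma lin_form {k : Type*} [Field k] (L : MvPolynomial (Fin 2) k) (hL : L.IsHomogeneous 1) :
    ∃ α β : k, L = C α * X 0 + C β * X 1 := by
  have h := (mem_homogeneousSubmodule 1 L).mpr hL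
  rw [homogeneousSubmodule_one_eq_span_X, Submodule.mem_span_range_iff_exists_fun] at h
  obtain ⟨c, hc⟩ := h
  exact ⟨c 0, c 1, by rw [← hc, Fin.sum_univ_two, smul_eq_C_mul, smul_eq_C_mul]⟩

lemma comp_dehom {k : Type*} [Field k] (G : MvPolynomial (Fin 3) k) (m : ℕ)
    (hG : G.IsHomogeneous m) (j : ℕ) (hj : j ≤ m) :
    homogeneousComponent j ((zpoly G).eval 1) = (zpoly G).coeff (m - j) := by
  have hdeg : (zpoly G).natDegree < m + 1 := by
    rw [Nat.lt_succ_iff, Polynomial.natDegree_le_iff_coeff_eq_zero]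
    exact fun i hi => (zpoly_coeff G m hG i).2 hi
  rw [Polynomial.eval_eq_sum_range' hdeg]
  simp only [one_pow, mul_one, map_sum]
  rw [Finset.sum_eq_single (m - j)]
  · apply homogeneousComponent_eq_self
    have := (zpoly_coeff G m hG (m - j)).1 (by omega)
    rwa [show m - (m - j) = j by omega] at this
  · intro i hi hne
    have hi' : i ≤ m := by simpa [Nat.lt_succ_iff] using hi
    rw [homogeneousComponent_of_mem ((zpoly_coeff G m hG i).1 hi'), if_neg (by omega)]
  · intro h; simp at h

lemma hom_zero_const {σ k : Type*} [Field k] (P : MvPolynomial σ k) (h : P.IsHomogeneous 0) :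
    ∃ c, P = C c :=
  ⟨_, (totalDegree_eq_zero_iff_eq_C).mp ((totalDegree_zero_iff_isHomogeneous _).mpr h)⟩

lemma main_alg {k : Type*} [Field k] [IsAlgClosed k] (d : ℕ) (hd : 3 ≤ d)
    (F : MvPolynomial (Fin 3) k) (hF : F.IsHomogeneous d)
    (hsing : ∀ P : Fin 3 → k, P ≠ 0 → (eval P F = 0 ∧ ∀ i : Fin 3, eval P (pderiv i F) = 0) →
      ∃ c : k, c ≠ 0 ∧ P = ![0, 0, c])
    (hA2 : ¬ ∃ a b : k, homogeneousComponent 2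
          (aeval (![X 0, X 1, 1] : Fin 3 → MvPolynomial (Fin 2) k) F)
        = (C a * X 0 + C b * X 1) ^ 2) :
    Irreducible F := by
  have hF0 : F ≠ 0 := by
    rintro rfl
    exact hA2 ⟨0, 0, by simp⟩
  have hunit : ∀ P : MvPolynomial (Fin 3) k, P ≠ 0 → P.IsHomogeneous 0 → IsUnit P := by
    intro P hP h
    obtain ⟨c, rfl⟩ := hom_zero_const P h
    exact (isUnit_iff_ne_zero.mpr (by rintro rfl; simp at hP)).map C
  refine ⟨fun hu => ?_, ?_⟩
  · have := (MvPolynomial.isUnit_iff_totalDegree_of_isReduced.mp hu).2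
    rw [hF.totalDegree hF0] at this
    omega
  rintro G H rfl
  by_contra hcon
  push Not at hcon
  obtain ⟨m, n, hmn, hG, hH⟩ := hom_factors G H d hF hF0
  have hm : 1 ≤ m := by
    by_contra hm
    obtain rfl : m = 0 := by omega
    exact hcon.1 (hunit G (left_ne_zero_of_mul hF0) hG)
  have hn : 1 ≤ n := by
    by_contra hn
    obtain rfl : n = 0 := by omega
    exact hcon.2 (hunit H (right_ne_zero_of_mul hF0) hH)
  have hno : ¬ ∃ a b z : k, ¬ (a = 0 ∧ b = 0) ∧ eval ![a, b, z] G = 0 ∧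
      eval ![a, b, z] H = 0 := by
    rintro ⟨a, b, z, hab, h1, h2⟩
    obtain ⟨c, -, hc⟩ := hsing ![a, b, z]
      (by intro h; exact hab ⟨by simpa using congrFun h 0, by simpa using congrFun h 1⟩)
      ⟨by simp [h1], fun i => by simp [h1, h2]⟩
    exact hab ⟨by simpa using congrFun hc 0, by simpa using congrFun hc 1⟩
  have hdG : (zpoly G).natDegree ≤ m := by
    rw [Polynomial.natDegree_le_iff_coeff_eq_zero]
    exact fun i hi => (zpoly_coeff G m hG i).2 hi
  have hdH : (zpoly H).natDegree ≤ n := by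
    rw [Polynomial.natDegree_le_iff_coeff_eq_zero]
    exact fun i hi => (zpoly_coeff H n hH i).2 hi
  have cG := (zpoly_coeff G m hG m).1 le_rfl
  have cH := (zpoly_coeff H n hH n).1 le_rfl
  rw [Nat.sub_self] at cG cH
  obtain ⟨g0, hg0⟩ := hom_zero_const _ cG
  obtain ⟨h0, hh0⟩ := hom_zero_const _ cH
  have hcase : g0 = 0 ∧ h0 = 0 := by
    by_contra hc
    refine hno (bez G H m n m n hG hH le_rfl le_rfl hdG hdH ?_ ?_)
    · nlinarith
    · intro a b _
      rw [hg0, hh0, eval_C, eval_C]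
      tauto
  obtain ⟨rfl, rfl⟩ := hcase
  rw [C_0] at hg0 hh0
  have hdG' : (zpoly G).natDegree ≤ m - 1 := by
    rw [Polynomial.natDegree_le_iff_coeff_eq_zero]
    intro i hi
    rcases eq_or_ne i m with rfl | h
    · exact hg0
    · exact (zpoly_coeff G m hG i).2 (by omega)
  have hdH' : (zpoly H).natDegree ≤ n - 1 := by
    rw [Polynomial.natDegree_le_iff_coeff_eq_zero]
    intro i hi
    rcases eq_or_ne i n with rfl | h
    · exact hh0
    · exact (zpoly_coeff H n hH i).2 (by omega)
  have lG := (zpoly_coeff G m hG (m - 1)).1 (by omega)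
  have lH := (zpoly_coeff H n hH (n - 1)).1 (by omega)
  rw [show m - (m - 1) = 1 by omega] at lG
  rw [show n - (n - 1) = 1 by omega] at lH
  obtain ⟨α, β, hL⟩ := lin_form _ lG
  obtain ⟨γ, δ, hM⟩ := lin_form _ lH
  have hcomp : homogeneousComponent 2
      (aeval (![X 0, X 1, 1] : Fin 3 → MvPolynomial (Fin 2) k) (G * H)) =
      (C α * X 0 + C β * X 1) * (C γ * X 0 + C δ * X 1) := by
    rw [zpoly_eval_one, comp_dehom _ d hF 2 (by omega), map_mul, ← hL, ← hM,
      show d - 2 = (m - 1) + (n - 1) by omega]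
    exact Polynomial.coeff_mul_add_eq_of_natDegree_le hdG' hdH'
  refine hno (bez G H m n (m - 1) (n - 1) hG hH (by omega) (by omega) hdG' hdH' ?_ ?_)
  · obtain ⟨m, rfl⟩ := Nat.exists_eq_add_of_le' hm
    obtain ⟨n, rfl⟩ := Nat.exists_eq_add_of_le' hn
    simp only [Nat.add_sub_cancel]
    have : 1 ≤ m + n := by omega
    nlinarith [Nat.zero_le (m * n)]
  · intro a b hab
    by_contra hz
    push Not at hz
    obtain ⟨z1, z2⟩ := hz
    rw [hL] at z1
    rw [hM] at z2
    simp at z1 z2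
    -- both forms are proportional to `b x - a y`
    have prop : ∀ u v : k, u * a + v * b = 0 → ∃ c, u = c * b ∧ v = - c * a := by
      intro u v h
      by_cases hb : b = 0
      · have ha : a ≠ 0 := fun h => hab ⟨h, hb⟩
        subst hb
        refine ⟨-v / a, ?_, by field_simp⟩
        simpa [ha] using h
      · refine ⟨u / b, by field_simp, ?_⟩
        field_simp
        linear_combination h
    obtain ⟨c1, rfl, rfl⟩ := prop _ _ z1
    obtain ⟨c2, rfl, rfl⟩ := prop _ _ z2
    obtain ⟨w, hw⟩ := IsAlgClosed.exists_pow_nat_eq (c1 * c2) (n := 2) (by norm_num)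
    refine hA2 ⟨w * b, - w * a, ?_⟩
    rw [hcomp]
    have hw' : (C w : MvPolynomial (Fin 2) k) ^ 2 = C c1 * C c2 := by
      rw [← C_pow, hw, C_mul]
    simp only [C_mul, C_neg]
    linear_combination (-(C b * X 0 - C a * X 1) ^ 2) * hw'

theorem irreducibility_criterion_unique_singular_point
    (K : Type*) [Field K] (d : ℕ) (hd : 3 ≤ d)
    (F : MvPolynomial (Fin 3) K) (hF : F.IsHomogeneous d)
    -- `[0:0:1]` is the unique singular point of `{F = 0}` over the algebraic closure:
    (hsing : ∀ P : Fin 3 → AlgebraicClosure K, P ≠ 0 →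
      ((eval P (MvPolynomial.map (algebraMap K (AlgebraicClosure K)) F) = 0 ∧
        ∀ i : Fin 3,
          eval P (pderiv i (MvPolynomial.map (algebraMap K (AlgebraicClosure K)) F)) = 0)
        ↔ ∃ c : AlgebraicClosure K, c ≠ 0 ∧ P = ![0, 0, c]))
    -- the quadratic term of `f(x,y) = F(x,y,1)` at the origin is not the square of a
    -- linear form over the algebraic closure:
    (hA2 : ¬ ∃ a b : AlgebraicClosure K,
      homogeneousComponent 2
          (aeval (![X 0, X 1, 1] : Fin 3 → MvPolynomial (Fin 2) (AlgebraicClosure K))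
            (MvPolynomial.map (algebraMap K (AlgebraicClosure K)) F))
        = (C a * X 0 + C b * X 1) ^ 2) :
    Irreducible (MvPolynomial.map (algebraMap K (AlgebraicClosure K)) F) := by
  refine main_alg d hd _ (hF.map _) (fun P hP h => (hsing P hP).mp h) hA2
end

section
/- Let 𝔽_q be a finite field of characteristic p > 3 and let K be an algebraic closure of 𝔽_q. Then the polynomial F = x^{q-1} + y^{q-1} + z^{q-1} - 3(x+y+z)^{q-1}, viewed in K[x,y,z], is irreducible; that is, the curve C it defines is geometrically irreducible. -/
open MvPolynomial

theorem key_ring {Q : Type*} [CommRing Q] (m q : ℕ) (hq : q = m + 2) (hq5 : 5 ≤ q)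
    (hq3 : q % 3 = 1 ∨ q % 3 = 2)
    (frob : ∀ a b : Q, (a + b) ^ q = a ^ q + b ^ q)
    (frob' : ∀ a b : Q, (a - b) ^ q = a ^ q - b ^ q)
    (c2 : ∀ P : Q, 2 * P = 0 → P = 0) (c3 : ∀ P : Q, 3 * P = 0 → P = 0)
    (x y z w : Q) (hw : w = x + y + z)
    (hx : x ^ m = 3 * w ^ m) (hy : y ^ m = 3 * w ^ m) (hz : z ^ m = 3 * w ^ m)
    (ct : ∀ P : Q, (x + y) * P = 0 → P = 0) : x = y ∧ y = z := by
  have hm : m ≠ 0 := by omega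
  have powc : ∀ (r : Q), (∀ P, r * P = 0 → P = 0) → ∀ j P, r ^ j * P = 0 → P = 0 := by
    intro r hr j
    induction j with
    | zero => intro P h; simpa using h
    | succ j ih =>
      intro P h
      exact ih P (hr _ (by rw [← h]; ring))
  have cwm : ∀ P, w ^ m * P = 0 → P = 0 := by
    intro P h
    let I : Ideal Q := (LinearMap.toSpanSingleton Q Q P).ker
    have hI : ∀ r, r ∈ I ↔ r * P = 0 := by
      intro r
      simp [I, LinearMap.mem_ker, LinearMap.toSpanSingleton_apply]
    have h1 : x ∈ I.radical := ⟨m, by rw [hI, hx, mul_assoc, h, mul_zero]⟩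
    have h2 : y ∈ I.radical := ⟨m, by rw [hI, hy, mul_assoc, h, mul_zero]⟩
    obtain ⟨N, hN⟩ := I.radical.add_mem h1 h2
    rw [hI] at hN
    exact powc _ ct N P hN
  have cw : ∀ P, w * P = 0 → P = 0 := by
    intro P h
    apply cwm
    obtain ⟨j, rfl⟩ := Nat.exists_eq_succ_of_ne_zero hm
    rw [pow_succ, mul_assoc, h, mul_zero]
  have cy : ∀ P, y * P = 0 → P = 0 := by
    intro P h
    apply cwm
    apply c3
    rw [← mul_assoc, ← hy]
    obtain ⟨j, rfl⟩ := Nat.exists_eq_succ_of_ne_zero hm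
    rw [pow_succ, mul_assoc, h, mul_zero]
  have xq : x ^ q = 3 * w ^ m * x ^ 2 := by rw [hq, pow_add, hx]
  have yq : y ^ q = 3 * w ^ m * y ^ 2 := by rw [hq, pow_add, hy]
  have zq : z ^ q = 3 * w ^ m * z ^ 2 := by rw [hq, pow_add, hz]
  have wq : w ^ q = w ^ m * w ^ 2 := by rw [hq, pow_add]
  have hsum : w ^ 2 - 3 * (x ^ 2 + y ^ 2 + z ^ 2) = 0 := by
    apply cwm
    have : w ^ q = x ^ q + y ^ q + z ^ q := by
      conv_lhs => rw [hw]
      rw [frob, frob]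
    rw [xq, yq, zq, wq] at this
    linear_combination this
  obtain ⟨a, ha⟩ : ∃ a, a = x - y := ⟨_, rfl⟩
  obtain ⟨b, hb⟩ : ∃ b, b = y - z := ⟨_, rfl⟩
  have hab : a ^ 2 + a * b + b ^ 2 = 0 := by
    have := c2 (a ^ 2 + a * b + b ^ 2) (by
      rw [hw] at hsum
      rw [ha, hb]; linear_combination -hsum)
    exact this
  have h33 : a ^ 3 = b ^ 3 := by linear_combination (a - b) * hab
  have aq : a ^ q = 3 * w ^ m * (a * (x + y)) := by
    conv_lhs => rw [ha]
    rw [frob', xq, yq, ha]; ring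
  have bq : b ^ q = 3 * w ^ m * (b * (y + z)) := by
    conv_lhs => rw [hb]
    rw [frob', yq, zq, hb]; ring
  have c3w : ∀ P, 3 * w ^ m * P = 0 → P = 0 := fun P h => cwm _ (c3 _ (by rw [← h]; ring))
  have h4 : a ^ 4 = 0 ∧ b ^ 4 = 0 := by
    have hq' := Nat.div_add_mod q 3
    rcases hq3 with h | h
    · have e1 : a ^ q = (a ^ 3) ^ (q / 3) * a := by
        conv_lhs => rw [← hq', h, pow_add, pow_mul, pow_one]
      have e2 : b ^ q = (a ^ 3) ^ (q / 3) * b := by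
        conv_lhs => rw [← hq', h, pow_add, pow_mul, pow_one]
        rw [h33]
      have : a * b * (a + b) = 0 := by
        apply c3w
        have e3 : b * a ^ q = a * b ^ q := by rw [e1, e2]; ring
        rw [aq, bq] at e3
        rw [ha, hb] at e3 ⊢
        linear_combination e3
      have hb3 : b ^ 3 = 0 := by linear_combination b * hab - this
      constructor
      · rw [pow_succ, h33, hb3, zero_mul]
      · rw [pow_succ, hb3, zero_mul]
    · have e1 : a ^ q = (a ^ 3) ^ (q / 3) * a ^ 2 := by
        conv_lhs => rw [← hq', h, pow_add, pow_mul]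
      have e2 : b ^ q = (a ^ 3) ^ (q / 3) * b ^ 2 := by
        conv_lhs => rw [← hq', h, pow_add, pow_mul]
        rw [h33]
      have h5 : a * b * (b * (x + y) - a * (y + z)) = 0 := by
        apply c3w
        have e3 : b ^ 2 * a ^ q = a ^ 2 * b ^ q := by rw [e1, e2]; ring
        rw [aq, bq] at e3
        linear_combination e3
      have h6 : a * b * (b - a) = 0 := by
        apply c2
        apply cw
        have hxx : x = y + a := by rw [ha]; ring
        have hzz : z = y - b := by rw [hb]; ring
        rw [hw]
        rw [hxx, hzz] at h5 ⊢
        linear_combination 3 * h5 - 2 * a * b * hab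
      have h7 : a ^ 3 * b = 0 := by
        apply c3
        linear_combination a * b * hab - a * h6 - (a + b) * h6
      have h8 : a ^ 4 = 0 := by linear_combination a^2 * hab - a * h6 - 2 * h7
      refine ⟨h8, ?_⟩
      have : b ^ 4 = a ^ 3 * b := by rw [h33]; ring
      rw [this, h7]
  have aq0 : a ^ q = 0 := pow_eq_zero_of_le (by omega) h4.1
  have bq0 : b ^ q = 0 := pow_eq_zero_of_le (by omega) h4.2
  have a0 : a = 0 := by
    apply ct
    apply c3w
    rw [← aq0, aq]; ring
  have b1 : b * (y + z) = 0 := c3w _ (by rw [← bq, bq0])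
  have b0 : b = 0 := by
    apply cy
    apply c2
    rw [a0] at hab
    rw [hb] at b1 hab ⊢
    linear_combination b1 + hab
  exact ⟨by rw [← sub_eq_zero, ← ha, a0], by rw [← sub_eq_zero, ← hb, b0]⟩

theorem frob_factor_scale {k : Type*} [Field k] (n : ℕ) (F G H : MvPolynomial (Fin 3) k)
    (hF0 : F ≠ 0) (hGH : F = G * H)
    (hF : aeval (fun i => Polynomial.C (X i) * Polynomial.X :
      Fin 3 → Polynomial (MvPolynomial (Fin 3) k)) F = Polynomial.C F * Polynomial.X ^ n) :
    ∃ i j, i + j = n ∧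
      aeval (fun i => Polynomial.C (X i) * Polynomial.X :
        Fin 3 → Polynomial (MvPolynomial (Fin 3) k)) G = Polynomial.C G * Polynomial.X ^ i ∧
      aeval (fun i => Polynomial.C (X i) * Polynomial.X :
        Fin 3 → Polynomial (MvPolynomial (Fin 3) k)) H = Polynomial.C H * Polynomial.X ^ j := by
  set σ : MvPolynomial (Fin 3) k →ₐ[k] Polynomial (MvPolynomial (Fin 3) k) :=
    aeval (fun i => Polynomial.C (X i) * Polynomial.X) with hσ
  have ev1 : ∀ P, (σ P).eval 1 = P := by
    intro P
    have : ((Polynomial.evalRingHom (1 : MvPolynomial (Fin 3) k)).comp σ.toRingHom)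
        = RingHom.id _ := by
      apply MvPolynomial.ringHom_ext
      · intro r
        simp [hσ, Polynomial.algebraMap_apply, MvPolynomial.algebraMap_eq]
      · intro i
        simp [hσ]
    exact RingHom.congr_fun this P
  have hmul : σ G * σ H = Polynomial.C F * Polynomial.X ^ n := by
    rw [← map_mul, ← hGH, hF]
  obtain ⟨i, j, b, c, hij, hbc, hb, hc⟩ := mul_eq_mul_prime_pow Polynomial.prime_X hmul
  have hbc0 : b * c ≠ 0 := by
    rw [← hbc]; simpa using hF0
  have hdeg : b.natDegree + c.natDegree = 0 := by
    rw [← Polynomial.natDegree_mul (left_ne_zero_of_mul hbc0) (right_ne_zero_of_mul hbc0), ← hbc,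
      Polynomial.natDegree_C]
  obtain ⟨b', rfl⟩ := Polynomial.natDegree_eq_zero.mp (show b.natDegree = 0 by omega)
  obtain ⟨c', rfl⟩ := Polynomial.natDegree_eq_zero.mp (show c.natDegree = 0 by omega)
  have h1 := ev1 G
  have h2 := ev1 H
  rw [hb] at h1
  rw [hc] at h2
  simp at h1 h2
  subst h1 h2
  exact ⟨i, j, hij, hb, hc⟩

theorem squarefree_aux {k : Type*} [Field k] (n : ℕ) (h2 : (2 : k) ≠ 0) (hn : (n : k) ≠ 0) :
    Squarefree (2 * (X 0 ^ n - X 2 ^ n) : MvPolynomial (Fin 3) k) := by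
  intro D hD
  have hder : ∀ i : Fin 3, D ∣ pderiv i (2 * (X 0 ^ n - X 2 ^ n) : MvPolynomial (Fin 3) k) := by
    intro i
    obtain ⟨E, hE⟩ := hD
    rw [hE]
    simp only [Derivation.leibniz, smul_eq_mul]
    exact ⟨E * pderiv i D + E * pderiv i D + D * pderiv i E, by ring⟩
  have u : IsUnit (C (2 * (n : k)) : MvPolynomial (Fin 3) k) :=
    (IsUnit.mk0 _ (mul_ne_zero h2 hn)).map C
  have d0 : D ∣ X 0 ^ (n - 1) := by
    have := hder 0
    have e : pderiv 0 (2 * (X 0 ^ n - X 2 ^ n) : MvPolynomial (Fin 3) k)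
        = C (2 * (n : k)) * X 0 ^ (n - 1) := by
      have h : pderiv 0 (2 : MvPolynomial (Fin 3) k) = 0 := by
        have := pderiv_C (R := k) (i := (0 : Fin 3)) (a := 2)
        rwa [map_ofNat] at this
      simp [Derivation.leibniz, Derivation.leibniz_pow, h, mul_assoc, map_ofNat C 2]
    rw [e] at this
    exact u.dvd_mul_left.mp this
  have d2 : D ∣ X 2 ^ (n - 1) := by
    have := hder 2
    have e : pderiv 2 (2 * (X 0 ^ n - X 2 ^ n) : MvPolynomial (Fin 3) k)
        = -(C (2 * (n : k)) * X 2 ^ (n - 1)) := by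
      have h : pderiv 2 (2 : MvPolynomial (Fin 3) k) = 0 := by
        have := pderiv_C (R := k) (i := (2 : Fin 3)) (a := 2)
        rwa [map_ofNat] at this
      simp [Derivation.leibniz, Derivation.leibniz_pow, h, mul_assoc, map_ofNat C 2]
    rw [e, dvd_neg] at this
    exact u.dvd_mul_left.mp this
  have hrel : IsRelPrime (X 0 : MvPolynomial (Fin 3) k) (X 2) := by
    rw [Irreducible.isRelPrime_iff_not_dvd (X_prime).irreducible]
    rw [MvPolynomial.X_dvd_X]
    decide
  exact (hrel.pow (m := n - 1) (n := n - 1)) d0 d2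

theorem nzd_aux {k : Type*} [Field k] (G H : MvPolynomial (Fin 3) k)
    (φ : MvPolynomial (Fin 3) k →ₐ[k] MvPolynomial (Fin 3) k)
    (hφ : φ = aeval ![X 0, -X 0, X 2])
    (hsq : Squarefree (φ (G * H)))
    (P : MvPolynomial (Fin 3) k) (hP : (X 0 + X 1) * P ∈ Ideal.span {G, H}) :
    P ∈ Ideal.span {G, H} := by
  have idem : ∀ A, φ (φ A) = φ A := by
    intro A
    have : φ.comp φ = φ := by
      apply MvPolynomial.algHom_ext
      intro i
      fin_cases i <;> simp [hφ]
    exact AlgHom.congr_fun this A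
  have ker : ∀ A, φ A = 0 → (X 0 + X 1) ∣ A := by
    intro A hA
    have : (Ideal.Quotient.mkₐ k (Ideal.span {(X 0 + X 1 : MvPolynomial (Fin 3) k)})).comp φ
        = Ideal.Quotient.mkₐ k (Ideal.span {(X 0 + X 1 : MvPolynomial (Fin 3) k)}) := by
      apply MvPolynomial.algHom_ext
      intro i
      fin_cases i
      · simp [hφ]
      · simp only [hφ, AlgHom.comp_apply, aeval_X, Ideal.Quotient.mkₐ_eq_mk]
        rw [Ideal.Quotient.eq, Ideal.mem_span_singleton]
        exact ⟨-1, by simp; ring⟩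
      · simp [hφ]
    have h := AlgHom.congr_fun this A
    rw [AlgHom.comp_apply, hA, map_zero] at h
    rw [← Ideal.mem_span_singleton, ← Ideal.Quotient.eq_zero_iff_mem]
    exact h.symm
  have ht : φ (X 0 + X 1) = 0 := by simp [hφ]
  rw [map_mul] at hsq
  have hne := hsq.ne_zero
  have hrel := (squarefree_mul_iff.mp hsq).1
  obtain ⟨A, B, hAB⟩ := Ideal.mem_span_pair.mp hP
  have h0 : φ A * φ G + φ B * φ H = 0 := by
    rw [← map_mul, ← map_mul, ← map_add, hAB, map_mul, ht, zero_mul]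
  have hd : φ H ∣ φ A := by
    apply hrel.symm.dvd_of_dvd_mul_right
    exact ⟨-φ B, by linear_combination h0⟩
  obtain ⟨C', hC⟩ := hd
  have hC2 : φ A = φ H * φ C' := by
    have := congrArg φ hC
    rwa [map_mul, idem, idem] at this
  obtain ⟨A', hA'⟩ := ker (A - H * C') (by rw [map_sub, map_mul, hC2, sub_self])
  obtain ⟨B', hB'⟩ := ker (B + G * C') (by
    rw [map_add, map_mul]
    have : φ H * (φ B + φ G * φ C') = 0 := by rw [hC2] at h0; linear_combination h0
    exact (mul_eq_zero.mp this).resolve_left (right_ne_zero_of_mul hne))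
  have ht0 : (X 0 + X 1 : MvPolynomial (Fin 3) k) ≠ 0 := by
    intro h
    have := congrArg (eval ![1, 0, 0]) h
    simp at this
  rw [Ideal.mem_span_pair]
  refine ⟨A', B', mul_left_cancel₀ ht0 ?_⟩
  linear_combination hAB - G * hA' - H * hB'

theorem linear_aux {k : Type*} [Field k] (G H : MvPolynomial (Fin 3) k) (i j : ℕ)
    (hi : 1 ≤ i) (hj : 2 ≤ j)
    (hG : aeval (fun i => Polynomial.C (X i) * Polynomial.X :
        Fin 3 → Polynomial (MvPolynomial (Fin 3) k)) G = Polynomial.C G * Polynomial.X ^ i)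
    (hH : aeval (fun i => Polynomial.C (X i) * Polynomial.X :
        Fin 3 → Polynomial (MvPolynomial (Fin 3) k)) H = Polynomial.C H * Polynomial.X ^ j)
    (h1 : (X 0 - X 1 : MvPolynomial (Fin 3) k) ∈ Ideal.span {G, H})
    (h2 : (X 1 - X 2 : MvPolynomial (Fin 3) k) ∈ Ideal.span {G, H}) : False := by
  set σ : MvPolynomial (Fin 3) k →ₐ[k] Polynomial (MvPolynomial (Fin 3) k) :=
    aeval (fun i => Polynomial.C (X i) * Polynomial.X) with hσ
  have ev0 : ∀ P, (σ P).eval 0 = C (constantCoeff P) := by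
    intro P
    have : ((Polynomial.evalRingHom (0 : MvPolynomial (Fin 3) k)).comp σ.toRingHom)
        = C.comp constantCoeff := by
      apply MvPolynomial.ringHom_ext
      · intro r
        simp [hσ, Polynomial.algebraMap_apply, MvPolynomial.algebraMap_eq]
      · intro i
        simp [hσ]
    exact RingHom.congr_fun this P
  obtain ⟨i, rfl⟩ := Nat.exists_eq_add_of_le' hi
  obtain ⟨j, rfl⟩ := Nat.exists_eq_add_of_le' hj
  have main : ∀ L : MvPolynomial (Fin 3) k, σ L = Polynomial.C L * Polynomial.X →
      L ∈ Ideal.span {G, H} → ∃ c : k, L = C c * (G * 0 ^ i) := by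
    intro L hL hm
    obtain ⟨A, B, hAB⟩ := Ideal.mem_span_pair.mp hm
    have h := congrArg σ hAB
    rw [map_add, map_mul, map_mul, hG, hH, hL] at h
    have h' : σ A * (Polynomial.C G * Polynomial.X ^ i)
        + σ B * (Polynomial.C H * Polynomial.X ^ (j + 1)) = Polynomial.C L :=
      mul_right_cancel₀ Polynomial.X_ne_zero (by linear_combination h)
    have h'' := congrArg (Polynomial.eval 0) h'
    simp [ev0] at h''
    exact ⟨_, h''.symm⟩
  obtain ⟨a, ha⟩ := main _ (by simp [hσ]; ring) h1
  obtain ⟨b, hb⟩ := main _ (by simp [hσ]; ring) h2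
  have e : C b * (X 0 - X 1) = (C a * (X 1 - X 2) : MvPolynomial (Fin 3) k) := by
    rw [ha, hb]; ring
  have e1 := congrArg (eval ![1, 0, 0]) e
  simp at e1
  rw [e1] at hb
  have e2 := congrArg (eval ![0, 1, 0]) hb
  simp at e2

theorem unit_aux {k : Type*} [Field k] (G : MvPolynomial (Fin 3) k) (hG0 : G ≠ 0)
    (hG : aeval (fun i => Polynomial.C (X i) * Polynomial.X :
        Fin 3 → Polynomial (MvPolynomial (Fin 3) k)) G = Polynomial.C G * Polynomial.X ^ 0) :
    IsUnit G := by
  set σ : MvPolynomial (Fin 3) k →ₐ[k] Polynomial (MvPolynomial (Fin 3) k) :=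
    aeval (fun i => Polynomial.C (X i) * Polynomial.X) with hσ
  have ev0 : (σ G).eval 0 = C (constantCoeff G) := by
    have : ((Polynomial.evalRingHom (0 : MvPolynomial (Fin 3) k)).comp σ.toRingHom)
        = C.comp constantCoeff := by
      apply MvPolynomial.ringHom_ext
      · intro r
        simp [hσ, Polynomial.algebraMap_apply, MvPolynomial.algebraMap_eq]
      · intro i
        simp [hσ]
    exact RingHom.congr_fun this G
  rw [hG] at ev0
  simp at ev0
  rw [ev0] at hG0 ⊢
  exact (IsUnit.mk0 _ (by intro h; exact hG0 (by rw [h, C_0]))).map C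

theorem main_aux {k : Type*} [Field k] (p r : ℕ) [Fact p.Prime] [CharP k p] (hp : 3 < p)
    (hr : r ≠ 0) :
    Irreducible
      (X 0 ^ (p ^ r - 1) + X 1 ^ (p ^ r - 1) + X 2 ^ (p ^ r - 1)
        - 3 * (X 0 + X 1 + X 2) ^ (p ^ r - 1) : MvPolynomial (Fin 3) k) := by
  have pp : p.Prime := Fact.out
  obtain ⟨q, hq⟩ : ∃ q, q = p ^ r := ⟨_, rfl⟩
  have hp5 : 5 ≤ p := by
    rcases Nat.lt_or_ge p 5 with h | h
    · have : p = 4 := by omega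
      rw [this] at pp
      exact absurd pp (by decide)
    · exact h
  have hqp : p ≤ q := hq ▸ Nat.le_self_pow hr p
  have hq5 : 5 ≤ q := by omega
  obtain ⟨m, hm⟩ : ∃ m, q = m + 2 := ⟨q - 2, by omega⟩
  have hq3 : q % 3 = 1 ∨ q % 3 = 2 := by
    have : ¬ 3 ∣ q := by
      rw [hq]
      intro h
      have := (Nat.prime_dvd_prime_iff_eq Nat.prime_three pp).mp (Nat.prime_three.dvd_of_dvd_pow h)
      omega
    omega
  have hqodd : Even (m + 1) := by
    have : Odd q := hq ▸ (pp.odd_of_ne_two (by omega)).pow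
    rw [hm] at this
    obtain ⟨l, hl⟩ := this
    exact ⟨l, by omega⟩
  have hchar : ∀ j : ℕ, 0 < j → j < p → (j : k) ≠ 0 := by
    intro j h1 h2 h
    rw [CharP.cast_eq_zero_iff k p] at h
    exact absurd (Nat.le_of_dvd h1 h) (by omega)
  have k2 : (2 : k) ≠ 0 := by simpa using hchar 2 (by omega) (by omega)
  have k3 : (3 : k) ≠ 0 := by simpa using hchar 3 (by omega) (by omega)
  have hqk : (q : k) = 0 := by
    rw [hq, Nat.cast_pow, CharP.cast_eq_zero, zero_pow hr]
  have hn1 : ((m + 1 : ℕ) : k) = -1 := by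
    rw [hm] at hqk
    push_cast at hqk ⊢
    linear_combination hqk
  rw [← hq, show q - 1 = m + 1 by omega]
  obtain ⟨F, hF⟩ : ∃ F : MvPolynomial (Fin 3) k, F = X 0 ^ (m + 1) + X 1 ^ (m + 1) + X 2 ^ (m + 1)
        - 3 * (X 0 + X 1 + X 2) ^ (m + 1) := ⟨_, rfl⟩
  rw [← hF]
  have hφF : aeval ![X 0, -X 0, X 2] F
      = (2 * (X 0 ^ (m + 1) - X 2 ^ (m + 1)) : MvPolynomial (Fin 3) k) := by
    rw [hF]
    simp only [map_sub, map_add, map_mul, map_pow, aeval_X, map_ofNat]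
    simp [hqodd.neg_pow]
    ring
  have hsq := squarefree_aux (k := k) (m + 1) k2 (by rw [hn1]; simp)
  rw [← hφF] at hsq
  have hF0 : F ≠ 0 := by
    rintro h
    rw [h, map_zero] at hsq
    exact hsq.ne_zero rfl
  refine ⟨?_, ?_⟩
  · intro h
    have := h.map (constantCoeff (R := k) (σ := Fin 3))
    rw [hF] at this
    simp at this
  intro G H hGH
  have hs : aeval (fun i => Polynomial.C (X i) * Polynomial.X :
      Fin 3 → Polynomial (MvPolynomial (Fin 3) k)) F
      = Polynomial.C F * Polynomial.X ^ (m + 1) := by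
    rw [hF]
    simp only [map_sub, map_add, map_mul, map_pow, aeval_X, map_ofNat, ← add_mul, mul_pow]
    ring
  obtain ⟨i, j, hij, hG, hH⟩ := frob_factor_scale (m + 1) F G H hF0 hGH hs
  by_contra hcon
  push Not at hcon
  have hi : 1 ≤ i := by
    by_contra h
    obtain rfl : i = 0 := by omega
    exact hcon.1 (unit_aux G (left_ne_zero_of_mul (hGH ▸ hF0)) hG)
  have hj : 1 ≤ j := by
    by_contra h
    obtain rfl : j = 0 := by omega
    exact hcon.2 (unit_aux H (right_ne_zero_of_mul (hGH ▸ hF0)) hH)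
  obtain ⟨I, hI⟩ : ∃ I, I = Ideal.span {G, H} := ⟨_, rfl⟩
  have hGI : G ∈ I := hI ▸ Ideal.subset_span (by simp)
  have hHI : H ∈ I := hI ▸ Ideal.subset_span (by simp)
  have hder : ∀ l : Fin 3, pderiv l F ∈ I := by
    intro l
    rw [hGH, Derivation.leibniz, smul_eq_mul, smul_eq_mul]
    exact I.add_mem (I.mul_mem_right _ hGI) (I.mul_mem_right _ hHI)
  have hcast : ((m : MvPolynomial (Fin 3) k) + 1) = -1 := by
    have := congrArg (C (σ := Fin 3)) hn1
    simpa using this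
  have hder' : ∀ l : Fin 3, pderiv l F = -(X l ^ m - 3 * (X 0 + X 1 + X 2) ^ m) := by
    intro l
    have h3 : pderiv l (3 : MvPolynomial (Fin 3) k) = 0 := by
      have := pderiv_C (R := k) (i := l) (a := 3)
      rwa [map_ofNat] at this
    rw [hF]
    simp only [map_sub, map_add, Derivation.leibniz, Derivation.leibniz_pow, h3]
    fin_cases l <;> simp [hcast] <;> ring
  have hrel : ∀ l : Fin 3, (Ideal.Quotient.mk I (X l)) ^ m
      = 3 * (Ideal.Quotient.mk I (X 0 + X 1 + X 2)) ^ m := by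
    intro l
    have := hder l
    rw [hder', neg_mem_iff] at this
    rw [← Ideal.Quotient.eq_zero_iff_mem] at this
    simp only [map_sub, map_mul, map_pow, map_ofNat] at this
    exact sub_eq_zero.mp this
  have hcan : ∀ (c : k), c ≠ 0 → ∀ P : MvPolynomial (Fin 3) k ⧸ I,
      Ideal.Quotient.mk I (C c) * P = 0 → P = 0 := by
    intro c hc P h
    have hu : IsUnit (Ideal.Quotient.mk I (C c)) := ((IsUnit.mk0 c hc).map C).map _
    exact hu.mul_right_eq_zero.mp h
  have hkey := key_ring (Q := MvPolynomial (Fin 3) k ⧸ I) m q hm hq5 hq3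
    (by
      intro a b
      obtain ⟨a, rfl⟩ := Ideal.Quotient.mk_surjective a
      obtain ⟨b, rfl⟩ := Ideal.Quotient.mk_surjective b
      rw [← map_add, ← map_pow, hq, add_pow_char_pow, map_add, map_pow, map_pow])
    (by
      intro a b
      obtain ⟨a, rfl⟩ := Ideal.Quotient.mk_surjective a
      obtain ⟨b, rfl⟩ := Ideal.Quotient.mk_surjective b
      rw [← map_sub, ← map_pow, hq, sub_pow_char_pow, map_sub, map_pow, map_pow])
    (by intro P h; exact hcan 2 k2 P (by rw [map_ofNat, map_ofNat]; exact h))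
    (by intro P h; exact hcan 3 k3 P (by rw [map_ofNat, map_ofNat]; exact h))
    (Ideal.Quotient.mk I (X 0)) (Ideal.Quotient.mk I (X 1)) (Ideal.Quotient.mk I (X 2))
    (Ideal.Quotient.mk I (X 0 + X 1 + X 2)) (by simp) (hrel 0) (hrel 1) (hrel 2)
    (by
      intro P h
      obtain ⟨P, rfl⟩ := Ideal.Quotient.mk_surjective P
      rw [← map_add, ← map_mul, Ideal.Quotient.eq_zero_iff_mem, hI] at h
      rw [Ideal.Quotient.eq_zero_iff_mem, hI]
      exact nzd_aux G H _ rfl (hGH ▸ hsq) P h)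
  obtain ⟨h1, h2⟩ := hkey
  rw [Ideal.Quotient.eq] at h1 h2
  rcases Nat.lt_or_ge j 2 with h | h
  · rw [hI, Set.pair_comm] at h1 h2
    exact linear_aux H G j i hj (by omega) hH hG h1 h2
  · rw [hI] at h1 h2
    exact linear_aux G H i j hi h hG hH h1 h2

theorem special_curve_geometrically_irreducible
    (K : Type*) [Field K] [Fintype K] (hp : 3 < ringChar K) :
    Irreducible
      (X 0 ^ (Fintype.card K - 1) + X 1 ^ (Fintype.card K - 1) + X 2 ^ (Fintype.card K - 1)
        - 3 * (X 0 + X 1 + X 2) ^ (Fintype.card K - 1) :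
        MvPolynomial (Fin 3) (AlgebraicClosure K)) := by
  obtain ⟨r, hpr, hcard⟩ := FiniteField.card K (ringChar K)
  have : Fact (ringChar K).Prime := ⟨hpr⟩
  have : CharP (AlgebraicClosure K) (ringChar K) :=
    charP_of_injective_algebraMap (algebraMap K (AlgebraicClosure K)).injective _
  rw [hcard]
  exact main_aux (ringChar K) r hp r.ne_zero
end

section
/- Let q be a prime power and let 𝔽 be the finite field with q² elements. The Hermitian curve H defined by x^{q+1} + y^{q+1} + z^{q+1} = 0 has exactly q³ + 1 points in ℙ²(𝔽): the number of points [x:y:z] ∈ ℙ²(𝔽) with x^{q+1} + y^{q+1} + z^{q+1} = 0 equals q³ + 1. -/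
open MvPolynomial

namespace HermAux

lemma frob {q : ℕ} (hq : IsPrimePow q) {K : Type*} [Field K] [Fintype K]
    (hcard : Fintype.card K = q ^ 2) (a b : K) : (a + b) ^ q = a ^ q + b ^ q := by
  obtain ⟨p, k, hp, hk, rfl⟩ := hq
  have : Fact p.Prime := ⟨hp.nat_prime⟩
  have : CharP K p := charP_of_card_eq_prime_pow (f := k * 2) (by rw [hcard, pow_mul])
  exact add_pow_char_pow a b p k

lemma frobNeg {q : ℕ} (hq : IsPrimePow q) {K : Type*} [Field K] [Fintype K]
    (hcard : Fintype.card K = q ^ 2) (a : K) : (-a) ^ q = - a ^ q := by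
  have h := frob hq hcard a (-a)
  rw [add_neg_cancel, zero_pow hq.pos.ne'] at h
  exact (neg_eq_of_add_eq_zero_right h.symm).symm

lemma normFix {q : ℕ} {K : Type*} [Field K] [Fintype K]
    (hcard : Fintype.card K = q ^ 2) (a : K) : (a ^ (q + 1)) ^ q = a ^ (q + 1) := by
  have h := FiniteField.pow_card a
  rw [hcard] at h
  rw [← pow_mul, show (q + 1) * q = q ^ 2 + q by ring, pow_add, h, pow_succ, mul_comm]

lemma fiber {q : ℕ} (hq : IsPrimePow q) {K : Type*} [Field K] [Fintype K] [DecidableEq K]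
    (hcard : Fintype.card K = q ^ 2) (s : K) (hs : s ^ q = s) :
    (∑ z : K, if z ^ (q + 1) = s then 1 else 0) + q * (if s = 0 then 1 else 0) = q + 1 := by
  by_cases h0 : s = 0
  · subst h0
    simp [add_comm]
  have hq1 : 1 < q := hq.one_lt
  obtain ⟨r, rfl⟩ : ∃ r, q = r + 1 := ⟨q - 1, by omega⟩
  obtain ⟨g, hg⟩ := IsCyclic.exists_generator (α := Kˣ)
  have hord : orderOf g = r * (r + 1 + 1) := by
    rw [orderOf_eq_card_of_forall_mem_zpowers hg, Nat.card_units, Nat.card_eq_fintype_card, hcard]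
    have : (r + 1) ^ 2 = r * (r + 1 + 1) + 1 := by ring
    omega
  have hr : 0 < r := by omega
  have hprim : IsPrimitiveRoot ((g ^ r : Kˣ) : K) (r + 1 + 1) := by
    rw [IsPrimitiveRoot.coe_units_iff]
    exact (IsPrimitiveRoot.orderOf g).pow (orderOf_pos g) hord
  have hex : ∃ α : K, α ^ (r + 1 + 1) = s := by
    obtain ⟨k, hk⟩ := (mem_powers_iff_mem_zpowers.2 (hg (Units.mk0 s h0)))
    have hk : g ^ k = Units.mk0 s h0 := hk
    have h1 : (Units.mk0 s h0) ^ r = 1 := by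
      ext
      push_cast
      have : s ^ r * s = 1 * s := by rw [← pow_succ, hs, one_mul]
      exact mul_right_cancel₀ h0 this
    rw [← hk, ← pow_mul] at h1
    have h2 := orderOf_dvd_of_pow_eq_one h1
    rw [hord, mul_comm k r] at h2
    obtain ⟨m, rfl⟩ := Nat.dvd_of_mul_dvd_mul_left hr h2
    refine ⟨((g ^ m : Kˣ) : K), ?_⟩
    have := congrArg (Units.val) hk
    simp only [Units.val_mk0] at this
    rw [← this, ← Units.val_pow_eq_pow_val, ← pow_mul, mul_comm]
  have hc := hprim.card_nthRoots s
  rw [if_pos hex] at hc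
  have hnd := hprim.nthRoots_nodup (a := s) h0
  rw [← Finset.card_filter, if_neg h0, mul_zero, add_zero]
  have : (Finset.univ.filter fun z : K => z ^ (r + 1 + 1) = s)
      = (Polynomial.nthRoots (r + 1 + 1) s).toFinset := by
    ext z
    simp [Polynomial.mem_nthRoots]
  rw [this, Multiset.toFinset_card_of_nodup hnd, hc]

lemma affine {q : ℕ} (hq : IsPrimePow q) {K : Type*} [Field K] [Fintype K] [DecidableEq K]
    (hcard : Fintype.card K = q ^ 2) :
    (∑ x : K, ∑ y : K, ∑ z : K,
      if x ^ (q + 1) + y ^ (q + 1) + z ^ (q + 1) = 0 then 1 else 0) + q ^ 3 = q ^ 5 + q ^ 2 := by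
  have e2 : (∑ x : K, ∑ y : K, if x ^ (q + 1) + y ^ (q + 1) = 0 then 1 else 0) + q * (∑ x : K, if x = 0 then 1 else 0)
      = q ^ 2 * (q + 1) := by
    rw [Finset.mul_sum, ← Finset.sum_add_distrib, ← hcard, ← smul_eq_mul,
      ← Finset.card_univ, ← Finset.sum_const]
    refine Finset.sum_congr rfl fun x _ => ?_
    have := fiber hq hcard (-(x ^ (q + 1))) (by rw [frobNeg hq hcard, normFix hcard])
    refine Eq.trans ?_ this
    congr 1
    · refine Finset.sum_congr rfl fun y _ => ?_
      exact if_congr (add_eq_zero_iff_neg_eq.trans eq_comm) rfl rfl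
    · simp
  have e3 : (∑ x : K, ∑ y : K, ∑ z : K,
      if x ^ (q + 1) + y ^ (q + 1) + z ^ (q + 1) = 0 then 1 else 0)
      + q * (∑ x : K, ∑ y : K, if x ^ (q + 1) + y ^ (q + 1) = 0 then 1 else 0)
      = q ^ 2 * (q ^ 2 * (q + 1)) := by
    rw [Finset.mul_sum, ← Finset.sum_add_distrib, ← hcard, ← smul_eq_mul,
      ← Finset.card_univ, ← Finset.sum_const]
    refine Finset.sum_congr rfl fun x _ => ?_
    rw [Finset.mul_sum, ← Finset.sum_add_distrib, ← smul_eq_mul, ← Finset.sum_const]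
    refine Finset.sum_congr rfl fun y _ => ?_
    have := fiber hq hcard (-(x ^ (q + 1) + y ^ (q + 1)))
      (by rw [frobNeg hq hcard, frob hq hcard, normFix hcard, normFix hcard])
    refine Eq.trans ?_ this
    congr 1
    · refine Finset.sum_congr rfl fun z _ => ?_
      exact if_congr (add_eq_zero_iff_neg_eq.trans eq_comm) rfl rfl
    · simp only [neg_eq_zero]
  have h1 : (∑ x : K, if x = 0 then 1 else 0) = 1 := by simp
  rw [h1] at e2
  zify at e2 e3 ⊢
  linear_combination e3 - (q : ℤ) * e2

/-- The Hermitian form. -/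
def herm (q : ℕ) {K : Type*} [Field K] (v : Fin 3 → K) : K :=
  v 0 ^ (q + 1) + v 1 ^ (q + 1) + v 2 ^ (q + 1)

lemma herm_smul (q : ℕ) {K : Type*} [Field K] (u : K) (v : Fin 3 → K) :
    herm q (u • v) = u ^ (q + 1) * herm q v := by
  simp [herm, mul_pow, mul_add]

lemma affineCard {q : ℕ} (hq : IsPrimePow q) {K : Type*} [Field K] [Fintype K]
    (hcard : Fintype.card K = q ^ 2) :
    Nat.card {v : Fin 3 → K // herm q v = 0} + q ^ 3 = q ^ 5 + q ^ 2 := by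
  classical
  rw [← affine hq hcard]
  congr 1
  rw [Nat.card_eq_fintype_card, Fintype.card_subtype, Finset.card_filter]
  let e : K × K × K ≃ (Fin 3 → K) :=
    { toFun := fun p => ![p.1, p.2.1, p.2.2]
      invFun := fun v => (v 0, v 1, v 2)
      left_inv := fun p => by simp
      right_inv := fun v => by ext i; fin_cases i <;> simp }
  rw [← e.sum_comp, Fintype.sum_prod_type]
  refine Finset.sum_congr rfl fun x _ => ?_
  rw [Fintype.sum_prod_type]
  rfl

lemma projCard {q : ℕ} {K : Type*} [Field K] [Fintype K] :
    Nat.card {v : Fin 3 → K // herm q v = 0} =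
    Nat.card {P : Projectivization K (Fin 3 → K) // herm q P.rep = 0} * (Nat.card K - 1) + 1 := by
  classical
  rw [← Nat.card_units, ← Nat.card_prod, ← Finite.card_option]
  symm
  let f : Option ({P : Projectivization K (Fin 3 → K) // herm q P.rep = 0} × Kˣ) →
      {v : Fin 3 → K // herm q v = 0} := fun o => match o with
    | none => ⟨0, by simp [herm]⟩
    | some (P, u) => ⟨(u : K) • P.1.rep, by rw [herm_smul, P.2, mul_zero]⟩
  refine Nat.card_eq_of_bijective f ⟨?_, ?_⟩
  · rintro (_ | ⟨⟨P, hP⟩, u⟩) (_ | ⟨⟨Q, hQ⟩, w⟩) h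
    · rfl
    · exact absurd (congrArg Subtype.val h).symm (smul_ne_zero w.ne_zero Q.rep_nonzero)
    · exact absurd (congrArg Subtype.val h) (smul_ne_zero u.ne_zero P.rep_nonzero)
    · have h : (u : K) • P.rep = (w : K) • Q.rep := congrArg Subtype.val h
      have hPQ : P = Q := by
        rw [← P.mk_rep, ← Q.mk_rep, Projectivization.mk_eq_mk_iff']
        refine ⟨(u : K)⁻¹ * w, ?_⟩
        rw [mul_smul, ← h, smul_smul, inv_mul_cancel₀ u.ne_zero, one_smul]
      subst hPQ
      have : u = w := Units.ext (smul_left_injective K P.rep_nonzero h)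
      subst this
      rfl
  · rintro ⟨v, hv⟩
    by_cases h0 : v = 0
    · exact ⟨none, Subtype.ext h0.symm⟩
    · obtain ⟨a, ha⟩ := Projectivization.exists_smul_eq_mk_rep K v h0
      have ha' : (a : K) • v = (Projectivization.mk K v h0).rep := ha
      refine ⟨some (⟨Projectivization.mk K v h0, ?_⟩, a⁻¹), Subtype.ext ?_⟩
      · rw [← ha', herm_smul, hv, mul_zero]
      · change ((a⁻¹ : Kˣ) : K) • (Projectivization.mk K v h0).rep = v
        rw [← ha', smul_smul, Units.inv_mul, one_smul]

end HermAux

theorem hermitian_curve_point_count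
    (q : ℕ) (hq : IsPrimePow q)
    (K : Type*) [Field K] [Fintype K] (hcard : Fintype.card K = q ^ 2) :
    Nat.card {P : Projectivization K (Fin 3 → K) //
        eval P.rep (X 0 ^ (q + 1) + X 1 ^ (q + 1) + X 2 ^ (q + 1) : MvPolynomial (Fin 3) K) = 0}
      = q ^ 3 + 1 := by
  have h1 := HermAux.affineCard hq hcard
  rw [HermAux.projCard, Nat.card_eq_fintype_card (α := K), hcard] at h1
  have e : ∀ P : Projectivization K (Fin 3 → K),
      eval P.rep (X 0 ^ (q + 1) + X 1 ^ (q + 1) + X 2 ^ (q + 1) : MvPolynomial (Fin 3) K)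
        = HermAux.herm q P.rep := fun P => by simp [HermAux.herm]
  simp only [e]
  have hq2 : 1 < q ^ 2 := one_lt_pow₀ hq.one_lt two_ne_zero
  refine Nat.eq_of_mul_eq_mul_right (Nat.sub_pos_of_lt hq2) ?_
  zify [hq2.le] at h1 ⊢
  linear_combination h1
end
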